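/- arXiv:1808.04199 — 3 statements merged into one kernel-verified Lean document; each statement's English description precedes it below -/
import Mathlib

section
/- For every n ≥ 3 and every 1 ≤ k ≤ n−1, the number R_{n,k} of permutations of length n with rev-tier n−2 in which the entry 1 occurs in position k+1 equals the Entringer number E_{n−1,k}, i.e., the number of down-up alternating permutations of length n−1 beginning with k. -/
/-!  Common definitions: permutation patterns, separated pairs, rev-tier. -/

/-- `π` contains the pattern `σ`. -/
def Pattern.Contains {n k : ℕ} (π : Equiv.Perm (Fin n)) (σ : Equiv.Perm (Fin k)) : Prop :=
  ∃ α : Fin k → Fin n, StrictMono α ∧ ∀ i j : Fin k, (π (α i) < π (α j) ↔ σ i < σ j)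

/-- `π` avoids the pattern `σ`. -/
def Pattern.Avoids {n k : ℕ} (π : Equiv.Perm (Fin n)) (σ : Equiv.Perm (Fin k)) : Prop :=
  ¬ Pattern.Contains π σ

/-- The pair of values `(a, a+1)` (0-indexed) is an up oriented separated pair in `σ`:
`a` precedes `a+1` and some value `> a+1` occurs strictly between them. -/
def UpSepPair {n : ℕ} (σ : Equiv.Perm (Fin n)) (a : Fin n) : Prop :=
  ∃ hb : (a : ℕ) + 1 < n,
    σ.symm a < σ.symm ⟨(a : ℕ) + 1, hb⟩ ∧
    ∃ p : Fin n, σ.symm a < p ∧ p < σ.symm ⟨(a : ℕ) + 1, hb⟩ ∧ (a : ℕ) + 1 < (σ p : ℕ)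

/-- The pair of values `(a, a+1)` (0-indexed) is a down oriented separated pair in `σ`. -/
def DownSepPair {n : ℕ} (σ : Equiv.Perm (Fin n)) (a : Fin n) : Prop :=
  ∃ hb : (a : ℕ) + 1 < n,
    σ.symm ⟨(a : ℕ) + 1, hb⟩ < σ.symm a ∧
    ∃ p : Fin n, σ.symm ⟨(a : ℕ) + 1, hb⟩ < p ∧ p < σ.symm a ∧ (a : ℕ) + 1 < (σ p : ℕ)

/-- `(a, a+1)` is a separated pair (of either orientation). -/
def SepPair {n : ℕ} (σ : Equiv.Perm (Fin n)) (a : Fin n) : Prop :=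
  UpSepPair σ a ∨ DownSepPair σ a

/-- `σ` has no separated pairs. -/
def NoSepPairs {n : ℕ} (σ : Equiv.Perm (Fin n)) : Prop :=
  ∀ a : Fin n, ¬ SepPair σ a

/-- `f` lists the lower values of an increasing sequence of separated pairs in `σ` with
alternating orientations; the first pair is down oriented iff `firstDown = true`. -/
def AltChain {n : ℕ} (σ : Equiv.Perm (Fin n)) (firstDown : Bool) {t : ℕ}
    (f : Fin t → Fin n) : Prop :=
  StrictMono f ∧ ∀ j : Fin t,
    if ((j : ℕ) % 2 = 0) ↔ (firstDown = true) then DownSepPair σ (f j)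
    else UpSepPair σ (f j)

/-- The rev-tier of `σ`: the maximal length of an increasing sequence of separated pairs
with alternating orientations beginning with a down oriented pair. -/
noncomputable def revTier {n : ℕ} (σ : Equiv.Perm (Fin n)) : ℕ :=
  sSup {t : ℕ | ∃ f : Fin t → Fin n, AltChain σ true f}

/-- Maximal length of an increasing alternating sequence of separated pairs (either
starting orientation). -/
noncomputable def maxAltLen {n : ℕ} (σ : Equiv.Perm (Fin n)) : ℕ :=
  sSup {t : ℕ | ∃ b : Bool, ∃ f : Fin t → Fin n, AltChain σ b f}

/-- `σ` has a separated pair and every maximum-length increasing alternating sequence of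
separated pairs begins with an up oriented pair. -/
def UpOriented {n : ℕ} (σ : Equiv.Perm (Fin n)) : Prop :=
  1 ≤ maxAltLen σ ∧ ¬ ∃ f : Fin (maxAltLen σ) → Fin n, AltChain σ true f

/-- `σ` has a separated pair and every maximum-length increasing alternating sequence of
separated pairs begins with a down oriented pair. -/
def DownOriented {n : ℕ} (σ : Equiv.Perm (Fin n)) : Prop :=
  1 ≤ maxAltLen σ ∧ ¬ ∃ f : Fin (maxAltLen σ) → Fin n, AltChain σ false f

/-- `σ` is a basis element of the class of permutations of rev-tier at most `t`. -/
def IsBasisElt (t : ℕ) {n : ℕ} (σ : Equiv.Perm (Fin n)) : Prop :=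
  t + 1 ≤ revTier σ ∧
  ∀ (m : ℕ) (τ : Equiv.Perm (Fin m)), m < n → Pattern.Contains σ τ → revTier τ ≤ t

/-- The entry `1` of `σ` is in (1-indexed) position `k`. -/
def onePos {n : ℕ} (σ : Equiv.Perm (Fin n)) (k : ℕ) : Prop :=
  ∀ h : 0 < n, (σ.symm ⟨0, h⟩ : ℕ) + 1 = k

/-- `η(n,k)`: number of permutations of length `n` with no separated pairs and entry `1`
in position `k`. -/
noncomputable def eta (n k : ℕ) : ℕ :=
  Nat.card {σ : Equiv.Perm (Fin n) // NoSepPairs σ ∧ onePos σ k}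

/-- `η(n)`: number of permutations of length `n` with no separated pairs. -/
noncomputable def etaTot (n : ℕ) : ℕ :=
  Nat.card {σ : Equiv.Perm (Fin n) // NoSepPairs σ}

/-- `μ_U(n,t,k)`: number of up-oriented permutations of length `n`, rev-tier `t`, with
entry `1` in position `k`. -/
noncomputable def muU (n t k : ℕ) : ℕ :=
  Nat.card {σ : Equiv.Perm (Fin n) // UpOriented σ ∧ revTier σ = t ∧ onePos σ k}

/-- `μ_D(n,t,k)`: number of down-oriented permutations of length `n`, rev-tier `t`, with
entry `1` in position `k`. -/
noncomputable def muD (n t k : ℕ) : ℕ :=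
  Nat.card {σ : Equiv.Perm (Fin n) // DownOriented σ ∧ revTier σ = t ∧ onePos σ k}

/-- `π` is a down-up alternating permutation: `π₁ > π₂ < π₃ > ⋯`. -/
def DownUp {n : ℕ} (π : Equiv.Perm (Fin n)) : Prop :=
  ∀ (i : ℕ) (h : i + 1 < n),
    if i % 2 = 0 then π ⟨i + 1, h⟩ < π ⟨i, by omega⟩
    else π ⟨i, by omega⟩ < π ⟨i + 1, h⟩

/-- The Entringer number `E_{n,k}`: down-up alternating permutations of length `n` whose
first entry is `k` (1-indexed value). -/
noncomputable def entringer (n k : ℕ) : ℕ :=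
  Nat.card {π : Equiv.Perm (Fin n) // DownUp π ∧ ∀ h : 0 < n, (π ⟨0, h⟩ : ℕ) + 1 = k}

/-- The reversal of a permutation: `(revP σ) j = σ (n + 1 - j)`. -/
def revP {n : ℕ} (σ : Equiv.Perm (Fin n)) : Equiv.Perm (Fin n) :=
  (Fin.revPerm).trans σ

/-- The explicit maximal rev-tier permutation of length `n` (0-indexed values):
the even entries of `{1,…,n}` in decreasing order, then `n`, then the odd entries in
increasing order. -/
def maxPermVal (n : ℕ) (i : Fin n) : Fin n :=
  if h1 : (i : ℕ) < (n - 1) / 2 then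
    ⟨2 * ((n - 1) / 2) - 2 * (i : ℕ) - 1, by omega⟩
  else if h2 : (i : ℕ) = (n - 1) / 2 then
    ⟨n - 1, by have := i.isLt; omega⟩
  else
    ⟨2 * ((i : ℕ) - (n - 1) / 2 - 1), by have := i.isLt; omega⟩

def p231 : Equiv.Perm (Fin 3) :=
  ⟨![1, 2, 0], ![2, 0, 1], by decide, by decide⟩

def p132 : Equiv.Perm (Fin 3) :=
  ⟨![0, 2, 1], ![0, 2, 1], by decide, by decide⟩

def p2413 : Equiv.Perm (Fin 4) :=
  ⟨![1, 3, 0, 2], ![2, 0, 3, 1], by decide, by decide⟩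

def p2431 : Equiv.Perm (Fin 4) :=
  ⟨![1, 3, 2, 0], ![3, 0, 2, 1], by decide, by decide⟩

def p23154 : Equiv.Perm (Fin 5) :=
  ⟨![1, 2, 0, 4, 3], ![2, 0, 1, 4, 3], by decide, by decide⟩

def p24153 : Equiv.Perm (Fin 5) :=
  ⟨![1, 3, 0, 4, 2], ![2, 0, 4, 1, 3], by decide, by decide⟩

def p24513 : Equiv.Perm (Fin 5) :=
  ⟨![1, 3, 4, 0, 2], ![3, 0, 4, 1, 2], by decide, by decide⟩

def p24531 : Equiv.Perm (Fin 5) :=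
  ⟨![1, 3, 4, 2, 0], ![4, 0, 3, 1, 2], by decide, by decide⟩

def p42513 : Equiv.Perm (Fin 5) :=
  ⟨![3, 1, 4, 0, 2], ![3, 1, 4, 0, 2], by decide, by decide⟩

def p42531 : Equiv.Perm (Fin 5) :=
  ⟨![3, 1, 4, 2, 0], ![4, 1, 3, 0, 2], by decide, by decide⟩

def p231564 : Equiv.Perm (Fin 6) :=
  ⟨![1, 2, 0, 4, 5, 3], ![2, 0, 1, 5, 3, 4], by decide, by decide⟩

def p261453 : Equiv.Perm (Fin 6) :=
  ⟨![1, 5, 0, 3, 4, 2], ![2, 0, 5, 3, 4, 1], by decide, by decide⟩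

def p523164 : Equiv.Perm (Fin 6) :=
  ⟨![4, 1, 2, 0, 5, 3], ![3, 1, 2, 5, 0, 4], by decide, by decide⟩

def p562413 : Equiv.Perm (Fin 6) :=
  ⟨![4, 5, 1, 3, 0, 2], ![4, 2, 5, 3, 0, 1], by decide, by decide⟩

def p562431 : Equiv.Perm (Fin 6) :=
  ⟨![4, 5, 1, 3, 2, 0], ![5, 2, 4, 3, 0, 1], by decide, by decide⟩

def p6723154 : Equiv.Perm (Fin 7) :=
  ⟨![5, 6, 1, 2, 0, 4, 3], ![4, 2, 3, 6, 5, 0, 1], by decide, by decide⟩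

def p4321 : Equiv.Perm (Fin 4) :=
  ⟨![3, 2, 1, 0], ![3, 2, 1, 0], by decide, by decide⟩

def p4213 : Equiv.Perm (Fin 4) :=
  ⟨![3, 1, 0, 2], ![2, 1, 3, 0], by decide, by decide⟩

/-!
Read `σ` through its inverse `π`, which lists the positions of the values `0, 1, 2, …`. A pair
`(a, a + 1)` can only be separated if some value exceeds `a + 1`, so rev-tier `n - 2` forces all
pairs `(0, 1), …, (n - 3, n - 2)` to be separated, with orientations down, up, down, ….

Delete the first entry `p` of `π` and standardize, and let `q` be the first entry of what remains.
Then `π` starts with a descent iff `q < p` and with an ascent iff `p ≤ q`, whereas `(0, 1)` is down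
separated iff `q + 1 < p` and up separated iff `p < q`. The two counts by first entry thus satisfy
recurrences that agree once `p` is shifted by one whenever the first pair is down oriented.
-/

section Prepend

variable {m : ℕ}

/-- Permutations of length `m` correspond to permutations of length `m + 1` with a given first
entry `p`, by deleting that entry and standardizing the others. -/
def prependEquiv (p : Fin (m + 1)) :
    Equiv.Perm (Fin m) ≃ {π : Equiv.Perm (Fin (m + 1)) // π 0 = p} :=
  ((Equiv.refl _).equivCongr (finSuccAboveEquiv p)).trans <|
    (Equiv.optionSubtype p).symm.trans <|
      ((finSuccEquiv m).symm.equivCongr (Equiv.refl _)).subtypeEquiv fun _ ↦ by simp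

/-- The permutation with first entry `p` whose other entries are in the same relative order as
those of `τ`. -/
def prepend (p : Fin (m + 1)) (τ : Equiv.Perm (Fin m)) : Equiv.Perm (Fin (m + 1)) :=
  prependEquiv p τ

@[simp]
lemma prepend_zero (p : Fin (m + 1)) (τ : Equiv.Perm (Fin m)) : prepend p τ 0 = p :=
  (prependEquiv p τ).2

@[simp]
lemma prepend_succ (p : Fin (m + 1)) (τ : Equiv.Perm (Fin m)) (i : Fin m) :
    prepend p τ i.succ = p.succAbove (τ i) := by
  simp [prepend, prependEquiv, Equiv.subtypeEquiv, finSuccAboveEquiv_apply]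

/-- The number of permutations of length `m + 1` in the class `P` with first entry `p`. -/
noncomputable def headCount (P : Equiv.Perm (Fin (m + 1)) → Prop) (p : Fin (m + 1)) : ℕ :=
  Nat.card {π : Equiv.Perm (Fin (m + 1)) // π 0 = p ∧ P π}

lemma headCount_eq_card_prepend (P : Equiv.Perm (Fin (m + 1)) → Prop) (p : Fin (m + 1)) :
    headCount P p = Nat.card {τ : Equiv.Perm (Fin m) // P (prepend p τ)} :=
  Nat.card_congr <| (Equiv.subtypeSubtypeEquivSubtypeInter (fun π ↦ π 0 = p) P).symm.trans
    ((prependEquiv p).subtypeEquiv fun _ ↦ Iff.rfl).symm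

lemma headCount_eq_factorial {P : Equiv.Perm (Fin (m + 1)) → Prop} (hP : ∀ π, P π)
    (p : Fin (m + 1)) : headCount P p = m.factorial := by
  simp [headCount_eq_card_prepend, hP, Nat.card_eq_fintype_card, Fintype.card_perm]

lemma headCount_eq_sum {P : Equiv.Perm (Fin (m + 2)) → Prop}
    {Q : Equiv.Perm (Fin (m + 1)) → Prop} {R : Fin (m + 1) → Prop} [DecidablePred R]
    {p : Fin (m + 2)} (h : ∀ τ, P (prepend p τ) ↔ R (τ 0) ∧ Q τ) :
    headCount P p = ∑ q with R q, headCount Q q := by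
  classical
  rw [headCount_eq_card_prepend]
  simp only [h, headCount, Nat.card_eq_fintype_card, Fintype.card_subtype]
  rw [Finset.card_eq_sum_card_fiberwise (f := fun τ ↦ τ 0) (t := {q | R q})
    (fun τ hτ ↦ by simp_all)]
  refine Finset.sum_congr rfl fun q hq ↦ congrArg Finset.card ?_
  ext τ
  simp only [Finset.mem_filter, Finset.mem_univ, true_and] at hq ⊢
  grind

end Prepend

section Alternates

/-- The conditions `D 0, U 1, D 2, U 3, …` all hold. -/
def Alternates {t : ℕ} (D U : Fin t → Prop) : Prop :=
  ∀ i : Fin t, if (i : ℕ) % 2 = 0 then D i else U i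

lemma alternates_succ_iff {t : ℕ} {D U : Fin (t + 1) → Prop} :
    Alternates D U ↔ D 0 ∧ Alternates (fun i ↦ U i.succ) (fun i ↦ D i.succ) := by
  have parity_succ (i : ℕ) : (i + 1) % 2 = 0 ↔ ¬ i % 2 = 0 := by omega
  simp only [Alternates, Fin.forall_fin_succ, Fin.val_zero, Nat.zero_mod, if_true, Fin.val_succ,
    parity_succ, ite_not]

variable {m : ℕ}

/-- `π` is an up-down alternating permutation: `π₁ < π₂ > π₃ < ⋯`. -/
def UpDown (π : Equiv.Perm (Fin (m + 1))) : Prop :=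
  Alternates (fun i : Fin m ↦ π i.castSucc < π i.succ) (fun i ↦ π i.succ < π i.castSucc)

lemma downUp_iff_alternates (π : Equiv.Perm (Fin (m + 1))) :
    DownUp π ↔
      Alternates (fun i : Fin m ↦ π i.succ < π i.castSucc) (fun i ↦ π i.castSucc < π i.succ) :=
  ⟨fun h i ↦ h i (by omega), fun h i hi ↦ h ⟨i, by omega⟩⟩

lemma downUp_prepend_iff (p : Fin (m + 2)) (τ : Equiv.Perm (Fin (m + 1))) :
    DownUp (prepend p τ) ↔ (τ 0).castSucc < p ∧ UpDown τ := by
  simp [downUp_iff_alternates, alternates_succ_iff, UpDown, Fin.succAbove_lt_iff_castSucc_lt]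

lemma upDown_prepend_iff (p : Fin (m + 2)) (τ : Equiv.Perm (Fin (m + 1))) :
    UpDown (prepend p τ) ↔ p ≤ (τ 0).castSucc ∧ DownUp τ := by
  simp [downUp_iff_alternates, alternates_succ_iff, UpDown, Fin.lt_succAbove_iff_le_castSucc]

end Alternates

section Separated

variable {m : ℕ}

lemma downSepPair_symm_castSucc_iff (π : Equiv.Perm (Fin (m + 1))) (a : Fin m) :
    DownSepPair π.symm a.castSucc ↔ ∃ v > a.succ, π a.succ < π v ∧ π v < π a.castSucc := by
  constructor
  · rintro ⟨_, _, x, hx, hx', hv⟩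
    exact ⟨π.symm x, hv, by rwa [π.apply_symm_apply], by rwa [π.apply_symm_apply]⟩
  · rintro ⟨v, hv, hx, hx'⟩
    exact ⟨by simp, hx.trans hx', π v, hx, hx', by rwa [π.symm_apply_apply]⟩

lemma upSepPair_symm_castSucc_iff (π : Equiv.Perm (Fin (m + 1))) (a : Fin m) :
    UpSepPair π.symm a.castSucc ↔ ∃ v > a.succ, π a.castSucc < π v ∧ π v < π a.succ := by
  constructor
  · rintro ⟨_, _, x, hx, hx', hv⟩
    exact ⟨π.symm x, hv, by rwa [π.apply_symm_apply], by rwa [π.apply_symm_apply]⟩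
  · rintro ⟨v, hv, hx, hx'⟩
    exact ⟨by simp, hx.trans hx', π v, hx, hx', by rwa [π.symm_apply_apply]⟩

lemma downSepPair_prepend_succ_iff (p : Fin (m + 2)) (τ : Equiv.Perm (Fin (m + 1))) (a : Fin m) :
    DownSepPair (prepend p τ).symm a.castSucc.succ ↔ DownSepPair τ.symm a.castSucc := by
  rw [Fin.succ_castSucc, downSepPair_symm_castSucc_iff, downSepPair_symm_castSucc_iff]
  simp [Fin.exists_fin_succ]

lemma upSepPair_prepend_succ_iff (p : Fin (m + 2)) (τ : Equiv.Perm (Fin (m + 1))) (a : Fin m) :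
    UpSepPair (prepend p τ).symm a.castSucc.succ ↔ UpSepPair τ.symm a.castSucc := by
  rw [Fin.succ_castSucc, upSepPair_symm_castSucc_iff, upSepPair_symm_castSucc_iff]
  simp [Fin.exists_fin_succ]

lemma exists_lt_and_castSucc_lt_iff {q : Fin m} {p : Fin (m + 1)} :
    (∃ r, q < r ∧ r.castSucc < p) ↔ q.succ < p := by
  constructor
  · rintro ⟨r, hqr, hrp⟩
    exact (Fin.succ_le_castSucc_iff.2 hqr).trans_lt hrp
  · intro hqp
    exact ⟨q.succ.castPred (Fin.ne_last_of_lt hqp), by simp [Fin.lt_castPred_iff],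
      by simpa using hqp⟩

lemma exists_le_castSucc_and_lt_iff {q : Fin m} {p : Fin (m + 1)} :
    (∃ r : Fin m, p ≤ r.castSucc ∧ r < q) ↔ p < q.castSucc := by
  constructor
  · rintro ⟨r, hpr, hrq⟩
    exact hpr.trans_lt (Fin.castSucc_lt_castSucc_iff.2 hrq)
  · intro hpq
    exact ⟨p.castPred (Fin.ne_last_of_lt hpq), by simp, by simpa [Fin.castPred_lt_iff] using hpq⟩

lemma downSepPair_prepend_zero_iff (p : Fin (m + 2)) (τ : Equiv.Perm (Fin (m + 1))) :
    DownSepPair (prepend p τ).symm 0 ↔ (τ 0).succ < p := by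
  have separated_iff : DownSepPair (prepend p τ).symm 0 ↔
      ∃ v > 0, τ 0 < τ v ∧ (τ v).castSucc < p := by
    rw [← Fin.castSucc_zero, downSepPair_symm_castSucc_iff]
    simp [Fin.exists_fin_succ (n := m + 1), Fin.succAbove_lt_iff_castSucc_lt,
      -Fin.succ_zero_eq_one, -Fin.succ_zero_eq_one']
  rw [← exists_lt_and_castSucc_lt_iff, τ.surjective.exists, separated_iff]
  refine exists_congr fun v ↦ and_iff_right_of_imp ?_
  rintro ⟨hv, -⟩
  exact Fin.pos_iff_ne_zero.2 fun v_eq ↦ hv.ne (congrArg τ v_eq.symm)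

lemma upSepPair_prepend_zero_iff (p : Fin (m + 2)) (τ : Equiv.Perm (Fin (m + 1))) :
    UpSepPair (prepend p τ).symm 0 ↔ p < (τ 0).castSucc := by
  have separated_iff : UpSepPair (prepend p τ).symm 0 ↔
      ∃ v > 0, p ≤ (τ v).castSucc ∧ τ v < τ 0 := by
    rw [← Fin.castSucc_zero, upSepPair_symm_castSucc_iff]
    simp [Fin.exists_fin_succ (n := m + 1), Fin.lt_succAbove_iff_le_castSucc,
      -Fin.succ_zero_eq_one, -Fin.succ_zero_eq_one']
  rw [← exists_le_castSucc_and_lt_iff, τ.surjective.exists, separated_iff]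
  refine exists_congr fun v ↦ and_iff_right_of_imp ?_
  rintro ⟨-, hv⟩
  exact Fin.pos_iff_ne_zero.2 fun v_eq ↦ hv.ne (congrArg τ v_eq)

/-- The pairs `(0, 1), …, (m - 1, m)` of values of `π⁻¹` are all separated, with orientations
down, up, down, …. The remaining pair `(m, m + 1)` never is, as no value lies above it. -/
def DownUpSep (π : Equiv.Perm (Fin (m + 2))) : Prop :=
  Alternates (fun i : Fin m ↦ DownSepPair π.symm i.castSucc.castSucc)
    (fun i ↦ UpSepPair π.symm i.castSucc.castSucc)

/-- The pairs `(0, 1), …, (m - 1, m)` of values of `π⁻¹` are all separated, with orientations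
up, down, up, …. The remaining pair `(m, m + 1)` never is, as no value lies above it. -/
def UpDownSep (π : Equiv.Perm (Fin (m + 2))) : Prop :=
  Alternates (fun i : Fin m ↦ UpSepPair π.symm i.castSucc.castSucc)
    (fun i ↦ DownSepPair π.symm i.castSucc.castSucc)

lemma downUpSep_prepend_iff (p : Fin (m + 3)) (τ : Equiv.Perm (Fin (m + 2))) :
    DownUpSep (prepend p τ) ↔ (τ 0).succ < p ∧ UpDownSep τ := by
  simp [DownUpSep, UpDownSep, alternates_succ_iff, downSepPair_prepend_zero_iff,
    downSepPair_prepend_succ_iff, upSepPair_prepend_succ_iff]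

lemma upDownSep_prepend_iff (p : Fin (m + 3)) (τ : Equiv.Perm (Fin (m + 2))) :
    UpDownSep (prepend p τ) ↔ p < (τ 0).castSucc ∧ DownUpSep τ := by
  simp [DownUpSep, UpDownSep, alternates_succ_iff, upSepPair_prepend_zero_iff,
    downSepPair_prepend_succ_iff, upSepPair_prepend_succ_iff]

end Separated

section Recurrences

variable {m : ℕ}

lemma headCount_downUp_eq_sum (p : Fin (m + 2)) :
    headCount DownUp p = ∑ q with Fin.castSucc q < p, headCount UpDown q :=
  headCount_eq_sum (downUp_prepend_iff p)

lemma headCount_upDown_eq_sum (p : Fin (m + 2)) :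
    headCount UpDown p = ∑ q with p ≤ Fin.castSucc q, headCount DownUp q :=
  headCount_eq_sum (upDown_prepend_iff p)

lemma headCount_downUpSep_eq_sum (p : Fin (m + 3)) :
    headCount DownUpSep p = ∑ q with Fin.succ q < p, headCount UpDownSep q :=
  headCount_eq_sum (downUpSep_prepend_iff p)

lemma headCount_upDownSep_eq_sum (p : Fin (m + 3)) :
    headCount UpDownSep p = ∑ q with p < Fin.castSucc q, headCount DownUpSep q :=
  headCount_eq_sum (upDownSep_prepend_iff p)

theorem headCount_sep_eq_headCount_alternating (p : Fin (m + 1)) :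
    headCount DownUpSep p.succ = headCount DownUp p ∧
      headCount UpDownSep p.castSucc = headCount UpDown p := by
  induction m with
  | zero =>
    have downUp (π : Equiv.Perm (Fin 1)) : DownUp π := fun i hi ↦ by omega
    have upDown (π : Equiv.Perm (Fin 1)) : UpDown π := fun i ↦ i.elim0
    have downUpSep (π : Equiv.Perm (Fin 2)) : DownUpSep π := fun i ↦ i.elim0
    have upDownSep (π : Equiv.Perm (Fin 2)) : UpDownSep π := fun i ↦ i.elim0
    simp [headCount_eq_factorial, downUp, upDown, downUpSep, upDownSep]
  | succ m ih =>
    rw [headCount_downUpSep_eq_sum, headCount_upDownSep_eq_sum, headCount_downUp_eq_sum,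
      headCount_upDown_eq_sum]
    simp only [Finset.sum_filter]
    constructor
    -- The top index `q = m + 1` contributes nothing.
    · rw [Fin.sum_univ_castSucc]
      simp [ih, Fin.le_last]
    -- The bottom index `q = 0` contributes nothing, and the others are shifted by one.
    · rw [Fin.sum_univ_succ]
      simp [ih, Fin.le_castSucc_iff]

end Recurrences

section RevTier

variable {m : ℕ}

lemma DownSepPair.val_add_two_lt {n : ℕ} {σ : Equiv.Perm (Fin n)} {a : Fin n}
    (h : DownSepPair σ a) : (a : ℕ) + 2 < n := by
  obtain ⟨_, _, x, _, _, hx⟩ := h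
  omega

lemma UpSepPair.val_add_two_lt {n : ℕ} {σ : Equiv.Perm (Fin n)} {a : Fin n}
    (h : UpSepPair σ a) : (a : ℕ) + 2 < n := by
  obtain ⟨_, _, x, _, _, hx⟩ := h
  omega

lemma AltChain.val_add_two_lt {n t : ℕ} {σ : Equiv.Perm (Fin n)} {b : Bool} {f : Fin t → Fin n}
    (h : AltChain σ b f) (j : Fin t) : (f j : ℕ) + 2 < n := by
  have hj := h.2 j
  split_ifs at hj
  exacts [hj.val_add_two_lt, hj.val_add_two_lt]

lemma AltChain.exists_strictMono_castSucc {t : ℕ} {σ : Equiv.Perm (Fin (m + 2))} {b : Bool}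
    {f : Fin t → Fin (m + 2)} (h : AltChain σ b f) :
    ∃ g : Fin t → Fin m, StrictMono g ∧ f = fun j ↦ (g j).castSucc.castSucc :=
  ⟨fun j ↦ ⟨f j, by have := h.val_add_two_lt j; omega⟩, fun _ _ hij ↦ h.1 hij, rfl⟩

lemma AltChain.length_le {t : ℕ} {σ : Equiv.Perm (Fin (m + 2))} {b : Bool}
    {f : Fin t → Fin (m + 2)} (h : AltChain σ b f) : t ≤ m := by
  obtain ⟨g, hg, -⟩ := h.exists_strictMono_castSucc
  simpa using Fintype.card_le_of_injective g hg.injective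

lemma AltChain.eq_castSucc_castSucc {σ : Equiv.Perm (Fin (m + 2))} {b : Bool}
    {f : Fin m → Fin (m + 2)} (h : AltChain σ b f) : f = fun j ↦ j.castSucc.castSucc := by
  obtain ⟨g, hg, rfl⟩ := h.exists_strictMono_castSucc
  exact funext fun j ↦ by rw [le_antisymm hg.apply_le (hg.le_apply (x := j))]

lemma exists_altChain_iff_downUpSep (σ : Equiv.Perm (Fin (m + 2))) :
    (∃ f : Fin m → Fin (m + 2), AltChain σ true f) ↔ DownUpSep σ.symm := by
  have altChain_iff : AltChain σ true (fun j : Fin m ↦ j.castSucc.castSucc) ↔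
      DownUpSep σ.symm := by
    simp [AltChain, DownUpSep, Alternates, StrictMono]
  constructor
  · rintro ⟨f, hf⟩
    exact altChain_iff.1 (hf.eq_castSucc_castSucc ▸ hf)
  · exact fun h ↦ ⟨_, altChain_iff.2 h⟩

lemma revTier_eq_iff_exists_altChain (σ : Equiv.Perm (Fin (m + 2))) :
    revTier σ = m ↔ ∃ f : Fin m → Fin (m + 2), AltChain σ true f := by
  let lengths : Set ℕ := {t | ∃ f : Fin t → Fin (m + 2), AltChain σ true f}
  have zero_mem : 0 ∈ lengths := ⟨Fin.elim0, fun i ↦ i.elim0, fun i ↦ i.elim0⟩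
  have mem_upperBounds : m ∈ upperBounds lengths := fun _ ⟨_, hf⟩ ↦ hf.length_le
  change sSup lengths = m ↔ m ∈ lengths
  constructor
  · intro h
    simpa only [h] using Nat.sSup_mem ⟨0, zero_mem⟩ ⟨m, mem_upperBounds⟩
  · exact fun h ↦ IsGreatest.csSup_eq ⟨h, mem_upperBounds⟩

lemma card_revTier_eq_headCount (p : Fin (m + 2)) :
    Nat.card {σ : Equiv.Perm (Fin (m + 2)) // revTier σ = m ∧ onePos σ (p + 1)} =
      headCount DownUpSep p := by
  refine Nat.card_congr ((Equiv.inv (Equiv.Perm (Fin (m + 2)))).subtypeEquiv fun σ ↦ ?_)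
  rw [revTier_eq_iff_exists_altChain, exists_altChain_iff_downUpSep, and_comm]
  simp [onePos, Fin.ext_iff, Equiv.Perm.inv_def]

lemma entringer_eq_headCount (p : Fin (m + 1)) :
    entringer (m + 1) (p + 1) = headCount DownUp p := by
  refine Nat.card_congr ((Equiv.refl _).subtypeEquiv fun π ↦ ?_)
  simp [Fin.ext_iff, and_comm]

end RevTier

/-- for `n ≥ 3` and `1 ≤ k ≤ n-1`, the number of permutations of length
`n` with rev-tier `n-2` whose entry `1` is in position `k+1` equals the Entringer number
`E_{n-1,k}`. -/
theorem maximal_revTier_entringer (n k : ℕ) (hn : 3 ≤ n) (hk : 1 ≤ k) (hkn : k ≤ n - 1) :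
    Nat.card {σ : Equiv.Perm (Fin n) // revTier σ = n - 2 ∧ onePos σ (k + 1)}
      = entringer (n - 1) k := by
  obtain ⟨m, rfl⟩ : ∃ m, n = m + 2 := ⟨n - 2, by omega⟩
  obtain ⟨p, rfl⟩ : ∃ p : Fin (m + 1), k = p + 1 :=
    ⟨⟨k - 1, by omega⟩, (Nat.sub_add_cancel hk).symm⟩
  calc Nat.card {σ : Equiv.Perm (Fin (m + 2)) // revTier σ = m ∧ onePos σ (p + 1 + 1)}
    _ = headCount DownUpSep p.succ := card_revTier_eq_headCount p.succ
    _ = headCount DownUp p := (headCount_sep_eq_headCount_alternating p).1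
    _ = entringer (m + 1) (p + 1) := (entringer_eq_headCount p).symm
end

section
/- For every n ≥ 3, the number R_n of permutations of length n with maximal rev-tier n−2 equals the Euler number E_{n−1}, i.e., the number of down-up alternating permutations of length n−1. Hence the maximal rev-tier permutations form an Entringer family. -/
/-!
Let `τ = σ⁻¹` list the positions of the values of `σ`. An alternating chain of length `n - 2` has to
use every pair `(i, i + 1)` with `i + 2 < n`, so `σ` has rev-tier `n - 2` exactly when all these
pairs are separated, in alternating orientations starting with down.

Both this condition on `τ` and the condition of being alternating on a permutation `π` of length
`n - 1` can be read off the Lehmer code, whose `i`-th term is the rank of the `i`-th entry among the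
entries from `i` on. If `p₀, p₁, …` is the code of `τ` and `q₀, q₁, …` the code of `π`, the
condition at `i` is
* `pᵢ₊₁ + 1 < pᵢ` respectively `qᵢ₊₁ < qᵢ`, if `i` is a down step;
* `pᵢ < pᵢ₊₁` respectively `qᵢ ≤ qᵢ₊₁`, if `i` is an up step.

Hence adding `1` to the code at every down step turns the alternating permutations of length `n - 1`
into the position sequences of the permutations of length `n` of maximal rev-tier. All of the latter
are reached, because for `n ≥ 3` their conditions exclude `pᵢ = 0` at a down step and `pᵢ` maximal
at an up step, also for the unconstrained step `i = n - 2`.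
-/

open Equiv (Perm)

/-! ### Alternating and separated sequences -/

/-- Strict comparison in a prescribed orientation: `b < a` if `down`, and `a < b` otherwise. -/
def OrientedLT {α : Type*} [LT α] : Bool → α → α → Prop
  | true, a, b => b < a
  | false, a, b => a < b

/-- The steps of `f` are alternately descents and ascents, the first one being a descent iff
`down`. The orientation of the `i`-th step is encoded as `down ^^ i.bodd`. -/
def Alternating {α : Type*} [LT α] {n : ℕ} (down : Bool) (f : Fin n → α) : Prop :=
  ∀ (i : ℕ) (h : i + 1 < n), OrientedLT (down ^^ i.bodd) (f ⟨i, by omega⟩) (f ⟨i + 1, h⟩)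

/-- The step from `f i` to `f (i + 1)` has the given orientation and some later entry of `f` lies
strictly between the two. For `f = σ⁻¹` this says that `(i, i + 1)` is a separated pair of `σ`. -/
def SepStep {α : Type*} [LT α] {n : ℕ} (down : Bool) (f : Fin n → α) (i : ℕ) (h : i + 1 < n) :
    Prop :=
  ∃ b : Fin n, i + 1 < (b : ℕ) ∧
    OrientedLT down (f ⟨i, by omega⟩) (f b) ∧ OrientedLT down (f b) (f ⟨i + 1, h⟩)

/-- The steps of `f` are separated with alternating orientations, the first one being a descent iff
`down`. The last step is exempt, there being no later entry to separate it. -/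
def SepAlternating {α : Type*} [LT α] {n : ℕ} (down : Bool) (f : Fin n → α) : Prop :=
  ∀ (i : ℕ) (h : i + 2 < n), SepStep (down ^^ i.bodd) f i (by omega)

section Sequences

variable {α β : Type*} {n : ℕ} {down : Bool}

lemma OrientedLT.ne [Preorder α] {a b : α} (h : OrientedLT down a b) : a ≠ b := by
  cases down
  · exact ne_of_lt h
  · exact ne_of_gt h

lemma orientedLT_map_iff [LinearOrder α] [Preorder β] {g : α → β} (hg : StrictMono g)
    {a b : α} : OrientedLT down (g a) (g b) ↔ OrientedLT down a b := by
  cases down <;> exact hg.lt_iff_lt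

lemma alternating_comp_iff [LinearOrder α] [Preorder β] {g : α → β} (hg : StrictMono g)
    (f : Fin n → α) : Alternating down (g ∘ f) ↔ Alternating down f := by
  simp only [Alternating, Function.comp_apply, orientedLT_map_iff hg]

lemma sepAlternating_comp_iff [LinearOrder α] [Preorder β] {g : α → β} (hg : StrictMono g)
    (f : Fin n → α) : SepAlternating down (g ∘ f) ↔ SepAlternating down f := by
  simp only [SepAlternating, SepStep, Function.comp_apply, orientedLT_map_iff hg]

lemma xor_bodd_succ (down : Bool) (i : ℕ) : (down ^^ (i + 1).bodd) = (!down ^^ i.bodd) := by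
  simp

lemma alternating_cons_iff [LT α] (a : α) (f : Fin (n + 1) → α) :
    Alternating down (Fin.cons a f : Fin (n + 2) → α) ↔
      OrientedLT down a (f 0) ∧ Alternating (!down) f := by
  constructor
  · intro h
    refine ⟨by simpa using h 0 (by omega), fun i hi => ?_⟩
    rw [← xor_bodd_succ]
    exact h (i + 1) (by omega)
  · rintro ⟨h0, h⟩ (_ | i) hi
    · simpa using h0
    · rw [xor_bodd_succ]
      exact h i (by omega)

lemma sepStep_cons_zero_iff [Preorder α] (a : α) (f : Fin (n + 1) → α) :
    SepStep down (Fin.cons a f : Fin (n + 2) → α) 0 (by omega) ↔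
      ∃ b, OrientedLT down a (f b) ∧ OrientedLT down (f b) (f 0) := by
  have hpos (b) (h : OrientedLT down a (f b) ∧ OrientedLT down (f b) (f 0)) : 0 < (b : ℕ) :=
    Fin.pos_iff_ne_zero.2 fun hb => h.2.ne (congrArg f hb)
  rw [SepStep, Fin.exists_fin_succ]
  simpa using exists_congr fun b => and_iff_right_of_imp (hpos b)

lemma sepStep_cons_succ_iff [LT α] (a : α) (f : Fin n → α) (i : ℕ) (h : i + 1 < n) :
    SepStep down (Fin.cons a f : Fin (n + 1) → α) (i + 1) (by omega) ↔ SepStep down f i h := by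
  have hsucc (j : ℕ) (hj : j < n) :
      (Fin.cons a f : Fin (n + 1) → α) ⟨j + 1, by omega⟩ = f ⟨j, hj⟩ := rfl
  simp [SepStep, Fin.exists_fin_succ, hsucc _ h, hsucc i (by omega)]

lemma sepAlternating_cons_iff [Preorder α] (a : α) (f : Fin (n + 2) → α) :
    SepAlternating down (Fin.cons a f : Fin (n + 3) → α) ↔
      (∃ b, OrientedLT down a (f b) ∧ OrientedLT down (f b) (f 0)) ∧
        SepAlternating (!down) f := by
  rw [← sepStep_cons_zero_iff]
  constructor
  · intro h
    refine ⟨by simpa using h 0 (by omega), fun i hi => ?_⟩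
    rw [← xor_bodd_succ, ← sepStep_cons_succ_iff a]
    exact h (i + 1) (by omega)
  · rintro ⟨h0, h⟩ (_ | i) hi
    · simpa using h0
    · rw [xor_bodd_succ, sepStep_cons_succ_iff]
      exact h i (by omega)

end Sequences

/-! ### Prepending an entry to a permutation -/

/-- The permutation of length `n + 1` with first entry `p` whose remaining entries are order
isomorphic to `π`. Its Lehmer code is `p` followed by the code of `π`. -/
def consPerm {n : ℕ} (p : Fin (n + 1)) (π : Perm (Fin n)) : Perm (Fin (n + 1)) :=
  ((finSuccEquiv n).trans (Equiv.optionCongr π)).trans (finSuccEquiv' p).symm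

section ConsPerm

variable {n : ℕ} {down : Bool}

lemma coe_consPerm (p : Fin (n + 1)) (π : Perm (Fin n)) :
    ⇑(consPerm p π) = Fin.cons p (p.succAbove ∘ π) := by
  funext i
  cases i using Fin.cases <;> simp [consPerm]

@[simp]
lemma consPerm_zero (p : Fin (n + 1)) (π : Perm (Fin n)) : consPerm p π 0 = p := by
  simp [coe_consPerm]

lemma consPerm_injective2 : Function.Injective2 (consPerm (n := n)) := by
  intro p q π ρ h
  obtain rfl : p = q := by simpa using congrArg (· 0) h
  refine ⟨rfl, Equiv.ext fun i => p.succAbove_right_injective ?_⟩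
  simpa [coe_consPerm] using congrArg (· i.succ) h

/-- A permutation of length `n + 1` amounts to its first entry together with the standardization of
the remaining entries. -/
noncomputable def consPermEquiv (n : ℕ) : Fin (n + 1) × Perm (Fin n) ≃ Perm (Fin (n + 1)) :=
  Equiv.ofBijective (Function.uncurry consPerm) <|
    (Fintype.bijective_iff_injective_and_card _).2
      ⟨consPerm_injective2.uncurry, by simp [Fintype.card_perm, Nat.factorial_succ]⟩

@[simp]
lemma consPermEquiv_symm_consPerm (p : Fin (n + 1)) (π : Perm (Fin n)) :
    (consPermEquiv n).symm (consPerm p π) = (p, π) :=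
  (consPermEquiv n).symm_apply_apply (p, π)

lemma exists_consPerm_eq (σ : Perm (Fin (n + 1))) : ∃ p π, consPerm p π = σ :=
  let ⟨x, hx⟩ := (consPermEquiv n).surjective σ
  ⟨x.1, x.2, hx⟩

lemma alternating_consPerm_iff (p : Fin (n + 2)) (π : Perm (Fin (n + 1))) :
    Alternating down (consPerm p π) ↔
      OrientedLT down p (p.succAbove (π 0)) ∧ Alternating (!down) π := by
  rw [coe_consPerm, alternating_cons_iff, alternating_comp_iff (Fin.strictMono_succAbove p),
    Function.comp_apply]

lemma sepAlternating_consPerm_iff (p : Fin (n + 3)) (τ : Perm (Fin (n + 2))) :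
    SepAlternating down (consPerm p τ) ↔
      (∃ v, OrientedLT down p (p.succAbove v) ∧ OrientedLT down v (τ 0)) ∧
        SepAlternating (!down) τ := by
  rw [coe_consPerm, sepAlternating_cons_iff, sepAlternating_comp_iff (Fin.strictMono_succAbove p)]
  simp only [Function.comp_apply, orientedLT_map_iff (Fin.strictMono_succAbove p)]
  rw [τ.surjective.exists (p := fun v =>
    OrientedLT down p (p.succAbove v) ∧ OrientedLT down v (τ 0))]

end ConsPerm

/-! ### Shifting the Lehmer code at the down steps -/

/-- The least entry if `down`, the greatest entry otherwise: the entry from which no step of the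
given orientation can start. -/
def deadEnd (down : Bool) (n : ℕ) : Fin (n + 1) :=
  bif down then 0 else Fin.last n

/-- The shift of one term of the Lehmer code: `k ↦ k + 1` if `down`, and `k ↦ k` otherwise. -/
def shiftEntry {n : ℕ} (down : Bool) (k : Fin n) : Fin (n + 1) :=
  (deadEnd down n).succAbove k

/-- The permutation whose Lehmer code is obtained from that of `π` by adding `1` to the terms with
even index if `down`, to those with odd index otherwise, and appending a final `0`. -/
noncomputable def shiftCode : (down : Bool) → {n : ℕ} → Perm (Fin n) → Perm (Fin (n + 1))
  | _, 0, _ => 1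
  | down, n + 1, π =>
    let (p, ρ) := (consPermEquiv n).symm π
    consPerm (shiftEntry down p) (shiftCode (!down) ρ)

section ShiftCode

variable {n : ℕ} {down : Bool}

lemma OrientedLT.left_ne_deadEnd {a b : Fin (n + 1)} (h : OrientedLT down a b) :
    a ≠ deadEnd down n := by
  cases down
  · exact Fin.ne_last_of_lt h
  · exact Fin.ne_zero_of_lt h

lemma OrientedLT.right_ne_deadEnd {a b : Fin (n + 1)} (h : OrientedLT down a b) :
    b ≠ deadEnd (!down) n := by
  cases down
  · exact Fin.ne_zero_of_lt h
  · exact Fin.ne_last_of_lt h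

lemma exists_shiftEntry_eq {p : Fin (n + 1)} (hp : p ≠ deadEnd down n) :
    ∃ k, shiftEntry down k = p :=
  Fin.exists_succAbove_eq hp

/-- The first conjunct only says that `v` equals `q` or lies beyond it in the given orientation, so
`v = q` is the optimal witness. -/
lemma exists_orientedLT_shiftEntry_iff (q : Fin (n + 2)) (a : Fin (n + 1)) :
    (∃ v, OrientedLT down (shiftEntry down q) ((shiftEntry down q).succAbove v) ∧
        OrientedLT down v (shiftEntry (!down) a)) ↔
      OrientedLT down q (q.succAbove a) := by
  cases down
  · simp only [OrientedLT, shiftEntry, deadEnd, cond_false, cond_true, Bool.not_false,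
      Fin.succAbove_last, Fin.succAbove_zero, Fin.lt_succAbove_iff_lt_castSucc]
    exact ⟨fun ⟨v, hqv, hva⟩ => (Fin.castSucc_lt_succ_iff.1 hqv).trans_lt hva,
      fun h => ⟨q, Fin.castSucc_lt_succ, h⟩⟩
  · simp only [OrientedLT, shiftEntry, deadEnd, cond_false, cond_true, Bool.not_true,
      Fin.succAbove_last, Fin.succAbove_zero, Fin.succAbove_lt_iff_castSucc_lt]
    exact ⟨fun ⟨v, hvq, hav⟩ => hav.trans_le (Fin.castSucc_lt_succ_iff.1 hvq),
      fun h => ⟨q, Fin.castSucc_lt_succ, h⟩⟩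

lemma shiftCode_consPerm (p : Fin (n + 1)) (π : Perm (Fin n)) :
    shiftCode down (consPerm p π) = consPerm (shiftEntry down p) (shiftCode (!down) π) := by
  simp [shiftCode]

lemma shiftCode_apply_zero (π : Perm (Fin (n + 1))) :
    shiftCode down π 0 = shiftEntry down (π 0) := by
  obtain ⟨p, ρ, rfl⟩ := exists_consPerm_eq π
  simp [shiftCode_consPerm]

lemma shiftCode_injective (down : Bool) (n : ℕ) :
    Function.Injective (shiftCode down : Perm (Fin n) → Perm (Fin (n + 1))) := by
  induction n generalizing down with
  | zero => exact Function.injective_of_subsingleton _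
  | succ n ih =>
    intro π ρ h
    obtain ⟨p, π, rfl⟩ := exists_consPerm_eq π
    obtain ⟨q, ρ, rfl⟩ := exists_consPerm_eq ρ
    rw [shiftCode_consPerm, shiftCode_consPerm] at h
    obtain ⟨hpq, hπρ⟩ := consPerm_injective2 h
    rw [Fin.succAbove_right_injective hpq, ih _ hπρ]

lemma sepAlternating_shiftCode_iff (π : Perm (Fin n)) :
    SepAlternating down (shiftCode down π) ↔ Alternating down π := by
  induction n generalizing down with
  | zero => exact ⟨fun _ i hi => by omega, fun _ i hi => by omega⟩
  | succ n ih =>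
    cases n with
    | zero => exact ⟨fun _ i hi => by omega, fun _ i hi => by omega⟩
    | succ n =>
      obtain ⟨p, ρ, rfl⟩ := exists_consPerm_eq π
      rw [shiftCode_consPerm, sepAlternating_consPerm_iff, alternating_consPerm_iff,
        shiftCode_apply_zero, exists_orientedLT_shiftEntry_iff, ih]

lemma exists_shiftCode_eq_consPerm {p : Fin (n + 2)} {ρ : Perm (Fin (n + 1))}
    (hp : p ≠ deadEnd down (n + 1)) (hρ : ∃ π, shiftCode (!down) π = ρ) :
    ∃ π, shiftCode down π = consPerm p ρ := by
  obtain ⟨q, rfl⟩ := exists_shiftEntry_eq hp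
  obtain ⟨π, rfl⟩ := hρ
  exact ⟨consPerm q π, shiftCode_consPerm q π⟩

lemma SepAlternating.exists_shiftCode_eq {τ : Perm (Fin (n + 2))} (hτ : SepAlternating down τ)
    (hτ0 : τ 0 ≠ deadEnd down (n + 1)) : ∃ π, shiftCode down π = τ := by
  induction n generalizing down with
  | zero =>
    obtain ⟨p, ρ, rfl⟩ := exists_consPerm_eq τ
    rw [consPerm_zero] at hτ0
    exact exists_shiftCode_eq_consPerm hτ0 ⟨1, Subsingleton.elim (α := Perm (Fin 1)) _ _⟩
  | succ n ih =>
    obtain ⟨p, ρ, rfl⟩ := exists_consPerm_eq τ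
    rw [consPerm_zero] at hτ0
    obtain ⟨⟨v, -, hv⟩, hρ⟩ := (sepAlternating_consPerm_iff p ρ).1 hτ
    exact exists_shiftCode_eq_consPerm hτ0 (ih hρ hv.right_ne_deadEnd)

lemma SepAlternating.apply_zero_ne_deadEnd {τ : Perm (Fin (n + 3))}
    (hτ : SepAlternating down τ) : τ 0 ≠ deadEnd down (n + 2) := by
  obtain ⟨b, -, hb, -⟩ := hτ 0 (by omega)
  simpa using hb.left_ne_deadEnd

lemma bijOn_shiftCode (down : Bool) (n : ℕ) :
    Set.BijOn (shiftCode down) {π : Perm (Fin (n + 2)) | Alternating down π}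
      {τ : Perm (Fin (n + 3)) | SepAlternating down τ} := by
  refine ⟨fun π hπ => (sepAlternating_shiftCode_iff π).2 hπ,
    (shiftCode_injective down _).injOn, fun τ hτ => ?_⟩
  obtain ⟨π, rfl⟩ := SepAlternating.exists_shiftCode_eq hτ hτ.apply_zero_ne_deadEnd
  exact ⟨π, (sepAlternating_shiftCode_iff π).1 hτ, rfl⟩

end ShiftCode

/-! ### Permutations of maximal rev-tier -/

/-- `(a, a + 1)` is a separated pair of `σ` of the given orientation. -/
def OrientedSepPair {n : ℕ} : Bool → Perm (Fin n) → Fin n → Prop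
  | true => DownSepPair
  | false => UpSepPair

section RevTier

variable {n t : ℕ} {down : Bool} {σ : Perm (Fin n)}

lemma orientedSepPair_iff_sepStep (σ : Perm (Fin n)) (i : ℕ) (h : i + 1 < n) :
    OrientedSepPair down σ ⟨i, by omega⟩ ↔ SepStep down σ.symm i h := by
  rw [SepStep, σ.surjective.exists]
  simp only [Equiv.symm_apply_apply]
  cases down
  · constructor
    · rintro ⟨_, _, p, hip, hpi, hp⟩
      exact ⟨p, hp, hip, hpi⟩
    · rintro ⟨p, hp, hip, hpi⟩
      exact ⟨h, lt_trans hip hpi, p, hip, hpi, hp⟩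
  · constructor
    · rintro ⟨_, _, p, hip, hpi, hp⟩
      exact ⟨p, hp, hpi, hip⟩
    · rintro ⟨p, hp, hpi, hip⟩
      exact ⟨h, lt_trans hip hpi, p, hip, hpi, hp⟩

lemma OrientedSepPair.add_two_lt {a : Fin n} (h : OrientedSepPair down σ a) :
    (a : ℕ) + 2 < n := by
  cases down <;>
  · obtain ⟨_, _, p, _, _, hp⟩ := h
    omega

lemma altChain_iff {f : Fin t → Fin n} :
    AltChain σ down f ↔
      StrictMono f ∧ ∀ j : Fin t, OrientedSepPair (down ^^ (j : ℕ).bodd) σ (f j) := by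
  refine and_congr_right fun _ => forall_congr' fun j => ?_
  rw [Nat.mod_two_of_bodd]
  cases down <;> cases (j : ℕ).bodd <;> simp [OrientedSepPair]

lemma AltChain.exists_strictMono {f : Fin t → Fin n} (hf : AltChain σ down f) :
    ∃ g : Fin t → Fin (n - 2), StrictMono g ∧ ∀ j, (g j : ℕ) = f j := by
  have hlt (j : Fin t) : (f j : ℕ) + 2 < n := ((altChain_iff.1 hf).2 j).add_two_lt
  exact ⟨fun j => ⟨f j, Nat.lt_sub_of_add_lt (hlt j)⟩, fun _ _ hij => hf.1 hij, fun _ => rfl⟩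

lemma AltChain.length_le_s12 {f : Fin t → Fin n} (hf : AltChain σ down f) : t ≤ n - 2 := by
  obtain ⟨g, hg, -⟩ := hf.exists_strictMono
  simpa using Fintype.card_le_of_injective g hg.injective

lemma AltChain.val_apply {f : Fin (n - 2) → Fin n} (hf : AltChain σ down f) (j : Fin (n - 2)) :
    (f j : ℕ) = j := by
  obtain ⟨g, hg, hgf⟩ := hf.exists_strictMono
  rw [← hgf, le_antisymm hg.apply_le hg.le_apply]

lemma exists_altChain_iff_sepAlternating (σ : Perm (Fin n)) :
    (∃ f : Fin (n - 2) → Fin n, AltChain σ down f) ↔ SepAlternating down σ.symm := by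
  constructor
  · rintro ⟨f, hf⟩ i hi
    have hfi : f ⟨i, by omega⟩ = ⟨i, by omega⟩ := Fin.ext (hf.val_apply _)
    rw [← orientedSepPair_iff_sepStep, ← hfi]
    exact (altChain_iff.1 hf).2 ⟨i, by omega⟩
  · intro h
    refine ⟨Fin.castLE (by omega), altChain_iff.2 ⟨Fin.strictMono_castLE _, fun j => ?_⟩⟩
    exact (orientedSepPair_iff_sepStep σ j (by omega)).2 (h j (by omega))

lemma revTier_eq_sub_two_iff (σ : Perm (Fin n)) :
    revTier σ = n - 2 ↔ SepAlternating true σ.symm := by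
  rw [← exists_altChain_iff_sepAlternating]
  have hne : {t | ∃ f : Fin t → Fin n, AltChain σ true f}.Nonempty :=
    ⟨0, Fin.elim0, fun i => i.elim0, fun i => i.elim0⟩
  have hub : n - 2 ∈ upperBounds {t | ∃ f : Fin t → Fin n, AltChain σ true f} :=
    fun t ⟨_, hf⟩ => hf.length_le_s12
  refine ⟨fun h => ?_, fun h => IsGreatest.csSup_eq ⟨h, hub⟩⟩
  exact h ▸ Nat.sSup_mem hne ⟨_, hub⟩

end RevTier

lemma alternating_true_iff_downUp {n : ℕ} (π : Perm (Fin n)) : Alternating true π ↔ DownUp π := by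
  refine forall₂_congr fun i _ => ?_
  rw [Nat.mod_two_of_bodd]
  cases i.bodd <;> simp [OrientedLT]

/-- for `n ≥ 3`, the number of permutations of length `n` with maximal
rev-tier `n-2` equals the Euler number `E_{n-1}`, the number of down-up alternating
permutations of length `n-1`. -/
theorem maximal_revTier_euler (n : ℕ) (hn : 3 ≤ n) :
    Nat.card {σ : Equiv.Perm (Fin n) // revTier σ = n - 2}
      = Nat.card {π : Equiv.Perm (Fin (n - 1)) // DownUp π} := by
  obtain ⟨m, rfl⟩ : ∃ m, n = m + 3 := Nat.exists_eq_add_of_le' hn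
  calc Nat.card {σ : Perm (Fin (m + 3)) // revTier σ = m + 3 - 2}
      = Nat.card {τ : Perm (Fin (m + 3)) // SepAlternating true τ} :=
        Nat.card_congr ((Equiv.symmEquiv _ _).subtypeEquiv revTier_eq_sub_two_iff)
    _ = Nat.card {π : Perm (Fin (m + 2)) // Alternating true π} :=
        (Nat.card_congr ((bijOn_shiftCode true m).equiv _)).symm
    _ = Nat.card {π : Perm (Fin (m + 2)) // DownUp π} :=
        Nat.card_congr (Equiv.subtypeEquivRight alternating_true_iff_downUp)
end

section
/- For all n ≥ 1, if a permutation π of length n has its entry 1 in position n or position n−1 and π has at least one separated pair, then the smallest separated pair of π is down oriented; consequently no up-oriented permutation of length n has its entry 1 in position n or n−1 (μ_U(n,t,n) = μ_U(n,t,n−1) = 0 for all t). Similarly, if the entry 1 is in position 1 or 2 and π has a separated pair, its smallest separated pair is up oriented, so μ_D(n,t,1) = μ_D(n,t,2) = 0 for all t. -/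
/-!
If `(a, a + 1)` is not a down oriented separated pair, then every larger entry to the right of
`a + 1` is also to the right of `a`, since otherwise it would lie between `a + 1` and `a`. So as
long as no down oriented pair has occurred, the larger entries to the right of `a` all lie to the
right of the entry `1`. An up oriented pair `(a, a + 1)` has at least two of them, namely `a + 1`
and a separating entry; if it comes before all down oriented pairs, the entry `1` therefore has at
least two entries to its right. Reversal exchanges the two orientations and settles the other end
of the permutation.

If the smallest separated pair is down oriented, it can be prepended to any alternating sequence
that begins with an up oriented pair, so the latter is not of maximum length.
-/

section SeparatedPairs

variable {n k : ℕ} {σ : Equiv.Perm (Fin n)} {a : Fin n}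

theorem DownSepPair.not_upSepPair (hdown : DownSepPair σ a) : ¬ UpSepPair σ a := by
  rintro ⟨_, hlt, _⟩
  obtain ⟨_, hgt, _⟩ := hdown
  exact hlt.asymm hgt

theorem revP_apply (p : Fin n) : revP σ p = σ p.rev := rfl

theorem revP_symm_apply (a : Fin n) : (revP σ).symm a = (σ.symm a).rev := rfl

theorem revP_revP (σ : Equiv.Perm (Fin n)) : revP (revP σ) = σ := by
  ext p
  simp only [revP_apply, Fin.rev_rev]

theorem DownSepPair.upSepPair_revP (hdown : DownSepPair σ a) : UpSepPair (revP σ) a := by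
  obtain ⟨ha, hlt, p, hsucc, hp, hlarge⟩ := hdown
  refine ⟨ha, Fin.rev_lt_rev.mpr hlt, p.rev, Fin.rev_lt_rev.mpr hp, Fin.rev_lt_rev.mpr hsucc, ?_⟩
  rwa [revP_apply, Fin.rev_rev]

theorem UpSepPair.downSepPair_revP (hup : UpSepPair σ a) : DownSepPair (revP σ) a := by
  obtain ⟨ha, hlt, p, hp, hsucc, hlarge⟩ := hup
  refine ⟨ha, Fin.rev_lt_rev.mpr hlt, p.rev, Fin.rev_lt_rev.mpr hsucc, Fin.rev_lt_rev.mpr hp, ?_⟩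
  rwa [revP_apply, Fin.rev_rev]

theorem upSepPair_revP : UpSepPair (revP σ) a ↔ DownSepPair σ a :=
  ⟨fun h ↦ revP_revP σ ▸ h.downSepPair_revP, DownSepPair.upSepPair_revP⟩

theorem downSepPair_revP : DownSepPair (revP σ) a ↔ UpSepPair σ a :=
  ⟨fun h ↦ revP_revP σ ▸ h.upSepPair_revP, UpSepPair.downSepPair_revP⟩

theorem sepPair_revP : SepPair (revP σ) a ↔ SepPair σ a := by
  rw [SepPair, SepPair, upSepPair_revP, downSepPair_revP, or_comm]

theorem onePos.revP (hpos : onePos σ k) : onePos (revP σ) (n + 1 - k) := by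
  intro h
  have hk := hpos h
  rw [revP_symm_apply, Fin.val_rev]
  omega

end SeparatedPairs

section LargerAfter

variable {n k : ℕ} {σ : Equiv.Perm (Fin n)} {a b : Fin n}

/-- The positions to the right of the value `a` in `σ` that hold a value larger than `a`. An up
oriented separated pair `(a, a + 1)` requires two of them. -/
def largerAfter (σ : Equiv.Perm (Fin n)) (a : Fin n) : Set (Fin n) :=
  {p | σ.symm a < p ∧ a < σ p}

theorem UpSepPair.nontrivial_largerAfter (hup : UpSepPair σ a) :
    (largerAfter σ a).Nontrivial := by
  obtain ⟨ha, hlt, p, hp, hsucc, hlarge⟩ := hup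
  have hp_mem : p ∈ largerAfter σ a := ⟨hp, Fin.lt_def.mpr (by omega)⟩
  have hsucc_mem : σ.symm ⟨a + 1, ha⟩ ∈ largerAfter σ a :=
    ⟨hlt, by rw [Equiv.apply_symm_apply, Fin.lt_def]; exact Nat.lt_succ_self _⟩
  exact ⟨p, hp_mem, _, hsucc_mem, hsucc.ne⟩

theorem largerAfter_succ_subset (ha : (a : ℕ) + 1 < n) (hdown : ¬ DownSepPair σ a) :
    largerAfter σ ⟨a + 1, ha⟩ ⊆ largerAfter σ a := by
  rintro p ⟨hp, hlarge⟩
  have ha_lt : a < σ p := (Fin.lt_def.mpr (Nat.lt_succ_self _)).trans hlarge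
  refine ⟨?_, ha_lt⟩
  by_contra! hle
  have hne : p ≠ σ.symm a := by
    rintro rfl
    simp at ha_lt
  have hlt := hle.lt_of_ne hne
  exact hdown ⟨ha, hp.trans hlt, p, hp, hlt, hlarge⟩

theorem largerAfter_subset_of_forall_not_downSepPair (hba : b ≤ a)
    (hdown : ∀ c, b ≤ c → c < a → ¬ DownSepPair σ c) : largerAfter σ a ⊆ largerAfter σ b := by
  obtain ⟨a, ha⟩ := a
  replace hba : (b : ℕ) ≤ a := hba
  induction a, hba using Nat.le_induction with
  | base => exact subset_rfl
  | succ c hbc ih =>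
    have hc : c < n := by omega
    calc largerAfter σ ⟨c + 1, ha⟩
        ⊆ largerAfter σ ⟨c, hc⟩ :=
          largerAfter_succ_subset ha (hdown ⟨c, hc⟩ hbc (Fin.mk_lt_mk.mpr c.lt_succ_self))
      _ ⊆ largerAfter σ b :=
          ih hc fun d hbd hdc ↦ hdown d hbd (hdc.trans (Fin.mk_lt_mk.mpr c.lt_succ_self))

theorem UpSepPair.add_two_le_of_onePos (hup : UpSepPair σ a)
    (hdown : ∀ b < a, ¬ DownSepPair σ b) (hpos : onePos σ k) : k + 2 ≤ n := by
  have h : 0 < n := a.pos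
  have hsubset : largerAfter σ a ⊆ largerAfter σ ⟨0, h⟩ :=
    largerAfter_subset_of_forall_not_downSepPair (Nat.zero_le _) fun c _ ↦ hdown c
  obtain ⟨p, ⟨hp, _⟩, q, ⟨hq, _⟩, hpq⟩ := hup.nontrivial_largerAfter.mono hsubset
  have hk := hpos h
  rw [Fin.lt_def] at hp hq
  rw [Ne, Fin.ext_iff] at hpq
  omega

theorem onePos.downSepPair_of_minimal (hpos : onePos σ k) (hk : n ≤ k + 1)
    (ha : Minimal (SepPair σ) a) : DownSepPair σ a := by
  refine ha.prop.resolve_left fun hup ↦ ?_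
  have := hup.add_two_le_of_onePos (fun b hba hb ↦ ha.not_prop_of_lt hba (Or.inr hb)) hpos
  omega

theorem onePos.upSepPair_of_minimal (hpos : onePos σ k) (hk : k ≤ 2)
    (ha : Minimal (SepPair σ) a) : UpSepPair σ a :=
  downSepPair_revP.mp <| hpos.revP.downSepPair_of_minimal (by omega) <| by
    simpa only [Minimal, sepPair_revP] using ha

end LargerAfter

section AlternatingSequences

variable {n t : ℕ} {σ : Equiv.Perm (Fin n)} {a : Fin n} {firstDown : Bool} {f : Fin t → Fin n}

theorem AltChain.upSepPair_zero (hf : AltChain σ false f) (ht : 0 < t) :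
    UpSepPair σ (f ⟨0, ht⟩) := by
  simpa using hf.2 ⟨0, ht⟩

theorem AltChain.cons (hf : AltChain σ false f) (ha : DownSepPair σ a) (haf : ∀ j, a < f j) :
    AltChain σ true (Fin.cons a f : Fin (t + 1) → Fin n) := by
  refine ⟨Fin.strictMono_cons.mpr ⟨haf, hf.1⟩, Fin.cases (by simpa using ha) fun j ↦ ?_⟩
  have hparity : ((j.succ : ℕ) % 2 = 0 ↔ true = true) ↔ ((j : ℕ) % 2 = 0 ↔ false = true) := by
    rw [Fin.val_succ, iff_true_right rfl, iff_false_right Bool.false_ne_true]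
    omega
  rw [Fin.cons_succ, if_congr hparity rfl rfl]
  exact hf.2 j

theorem AltChain.revP (hf : AltChain σ firstDown f) : AltChain (revP σ) (!firstDown) f := by
  refine ⟨hf.1, fun j ↦ ?_⟩
  have hparity : ((j : ℕ) % 2 = 0 ↔ (!firstDown) = true) ↔
      ¬ ((j : ℕ) % 2 = 0 ↔ firstDown = true) := by
    rw [Bool.not_eq_true', ← Bool.not_eq_true, not_iff]
    tauto
  simp only [upSepPair_revP, downSepPair_revP, hparity, ite_not]
  exact hf.2 j

theorem altChain_revP : AltChain (revP σ) firstDown f ↔ AltChain σ (!firstDown) f := by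
  refine ⟨fun h ↦ revP_revP σ ▸ h.revP, fun h ↦ ?_⟩
  simpa only [Bool.not_not] using h.revP

theorem bddAbove_altChain_length (σ : Equiv.Perm (Fin n)) :
    BddAbove {t : ℕ | ∃ b : Bool, ∃ f : Fin t → Fin n, AltChain σ b f} := by
  refine ⟨n, ?_⟩
  rintro t ⟨_, f, hmono, _⟩
  simpa only [Fintype.card_fin] using Fintype.card_le_of_injective f hmono.injective

theorem AltChain.length_le_maxAltLen (hf : AltChain σ firstDown f) : t ≤ maxAltLen σ :=
  le_csSup (bddAbove_altChain_length σ) ⟨firstDown, f, hf⟩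

theorem exists_altChain_maxAltLen (σ : Equiv.Perm (Fin n)) :
    ∃ b : Bool, ∃ f : Fin (maxAltLen σ) → Fin n, AltChain σ b f :=
  Nat.sSup_mem (s := {t : ℕ | ∃ b : Bool, ∃ f : Fin t → Fin n, AltChain σ b f})
    ⟨0, true, Fin.elim0, fun i ↦ i.elim0, fun i ↦ i.elim0⟩ (bddAbove_altChain_length σ)

theorem maxAltLen_revP (σ : Equiv.Perm (Fin n)) : maxAltLen (revP σ) = maxAltLen σ := by
  simp only [maxAltLen, altChain_revP, Bool.exists_bool, Bool.not_false, Bool.not_true, or_comm]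

theorem upOriented_revP : UpOriented (revP σ) ↔ DownOriented σ := by
  rw [UpOriented, DownOriented, maxAltLen_revP]
  simp only [altChain_revP, Bool.not_true]

theorem UpOriented.exists_altChain_false (hσ : UpOriented σ) :
    ∃ f : Fin (maxAltLen σ) → Fin n, AltChain σ false f :=
  (Bool.exists_bool.mp (exists_altChain_maxAltLen σ)).resolve_right hσ.2

theorem UpOriented.exists_minimal_upSepPair (hσ : UpOriented σ) :
    ∃ a, Minimal (SepPair σ) a ∧ UpSepPair σ a := by
  obtain ⟨f, hf⟩ := hσ.exists_altChain_false
  have hfirst := hf.upSepPair_zero hσ.1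
  obtain ⟨a, hle, ha⟩ := exists_minimal_le_of_wellFoundedLT (SepPair σ) _ (Or.inl hfirst)
  refine ⟨a, ha, ha.prop.resolve_right fun hdown ↦ ?_⟩
  have hlt : a < f ⟨0, hσ.1⟩ := hle.lt_of_ne fun heq ↦ hdown.not_upSepPair (heq ▸ hfirst)
  have hlonger := hf.cons hdown fun j ↦ hlt.trans_le (hf.1.monotone (Nat.zero_le _))
  exact hlonger.length_le_maxAltLen.not_gt (Nat.lt_succ_self _)

end AlternatingSequences

section Counting

variable {n k : ℕ} {σ : Equiv.Perm (Fin n)}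

theorem onePos.not_upOriented (hpos : onePos σ k) (hk : n ≤ k + 1) : ¬ UpOriented σ := by
  intro hσ
  obtain ⟨a, ha, hup⟩ := hσ.exists_minimal_upSepPair
  exact (hpos.downSepPair_of_minimal hk ha).not_upSepPair hup

theorem onePos.not_downOriented (hpos : onePos σ k) (hk : k ≤ 2) : ¬ DownOriented σ := by
  rw [← upOriented_revP]
  exact hpos.revP.not_upOriented (by omega)

theorem muU_eq_zero_of_le (hk : n ≤ k + 1) (t : ℕ) : muU n t k = 0 :=
  Nat.card_eq_zero.mpr <| .inl ⟨fun ⟨_, hσ, _, hpos⟩ ↦ hpos.not_upOriented hk hσ⟩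

theorem muD_eq_zero_of_le (hk : k ≤ 2) (t : ℕ) : muD n t k = 0 :=
  Nat.card_eq_zero.mpr <| .inl ⟨fun ⟨_, hσ, _, hpos⟩ ↦ hpos.not_downOriented hk hσ⟩

end Counting

/-- if the entry `1` of a permutation of length `n` is in position `n` or
`n-1` then its smallest separated pair (if any) is down oriented, so
`μ_U(n,t,n) = μ_U(n,t,n-1) = 0`; symmetrically if `1` is in position `1` or `2` the
smallest separated pair is up oriented, so `μ_D(n,t,1) = μ_D(n,t,2) = 0`. -/
theorem one_position_constraints (n : ℕ) (hn : 1 ≤ n) :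
    (∀ (σ : Equiv.Perm (Fin n)) (h : 0 < n),
      ((σ.symm ⟨0, h⟩ : ℕ) + 1 = n ∨ (σ.symm ⟨0, h⟩ : ℕ) + 1 = n - 1) →
      ∀ a : Fin n, SepPair σ a → (∀ b : Fin n, b < a → ¬ SepPair σ b) →
      DownSepPair σ a) ∧
    (∀ t : ℕ, muU n t n = 0 ∧ muU n t (n - 1) = 0) ∧
    (∀ (σ : Equiv.Perm (Fin n)) (h : 0 < n),
      ((σ.symm ⟨0, h⟩ : ℕ) + 1 = 1 ∨ (σ.symm ⟨0, h⟩ : ℕ) + 1 = 2) →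
      ∀ a : Fin n, SepPair σ a → (∀ b : Fin n, b < a → ¬ SepPair σ b) →
      UpSepPair σ a) ∧
    (∀ t : ℕ, muD n t 1 = 0 ∧ muD n t 2 = 0) := by
  refine ⟨fun σ h hpos a ha hmin ↦ ?_,
    fun t ↦ ⟨muU_eq_zero_of_le (by omega) t, muU_eq_zero_of_le (by omega) t⟩,
    fun σ h hpos a ha hmin ↦ ?_,
    fun t ↦ ⟨muD_eq_zero_of_le (by omega) t, muD_eq_zero_of_le le_rfl t⟩⟩
  · have hone : onePos σ (σ.symm ⟨0, h⟩ + 1) := fun _ ↦ rfl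
    exact hone.downSepPair_of_minimal (by omega) (minimal_iff_forall_lt.mpr ⟨ha, hmin⟩)
  · have hone : onePos σ (σ.symm ⟨0, h⟩ + 1) := fun _ ↦ rfl
    exact hone.upSepPair_of_minimal (by omega) (minimal_iff_forall_lt.mpr ⟨ha, hmin⟩)
end
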